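/- In the setting of the proof of Ehrenfeucht's theorem: let M be a countable non-standard model of PA with SSy(M) ⊆ S for a Scott set S, let a ∈ M − ω, let f₀, …, f_{k+1} be M-coded functions from {n ∈ M : n < 2^a} to M, and let X₀, …, X_k ∈ S be such that p_k(x) = {x < 2^a} ∪ {(f_i(x))_n = X_i(n) : i ≤ k, n ∈ ω} is finitely realizable in M. Let T be the set of tuples σ⃗ = (σ_i : i ≤ k+1) of finite binary sequences of equal length such that the set W(σ⃗) = {c < 2^a : for all i ≤ k+1 and n < |σ_i|, (f_i(c))_n = σ_i(n)} is nonempty in M, and let T' be the set of finite binary sequences τ such that (τ₀, …, τ_k, τ) ∈ T where τ_i is the initial segment of X_i of length |τ|. Then T' is an infinite binary tree that is Turing reducible to (⊕_{i≤k} X_i) ⊕ T; consequently, since T ∈ SSy(M) ⊆ S and S is a Scott set, S contains an infinite path X_{k+1} of T', and p_{k+1}(x) = p_k(x) ∪ {(f_{k+1}(x))_n = X_{k+1}(n) : n ∈ ω} is finitely realizable in M. -/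

import Mathlib

/-! Primitive recursive relations are represented in `M` by formulas, because Gödel's `β` function
codes computations. A representable family of properties that is satisfiable up to every standard
level is satisfied by a single element at all standard levels (overspill), so the trace on `ℕ` of a
representable predicate is the digit set of a non-standard element. Membership in `T` is such a
predicate, whence `T ∈ SSy(M)`. The tree `T'` is infinite because an element `c` realizing `p_k` up
to level `m` provides a node of length `m`, namely the first `m` digits of `f_{k+1}(c)`; conversely,
a node of `T'` of length `m` says exactly that `p_{k+1}` is realized up to level `m`, so any path
through `T'` makes `p_{k+1}` finitely realizable. -/

open FirstOrder FirstOrder.Language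

/-- Function symbols of the language of arithmetic: `0`, `1`, `+`, `·`. -/
inductive arithFunc : ℕ → Type
  | zero : arithFunc 0
  | one : arithFunc 0
  | add : arithFunc 2
  | mul : arithFunc 2
  deriving DecidableEq

/-- Relation symbols of the language of arithmetic: `<`. -/
inductive arithRel : ℕ → Type
  | lt : arithRel 2
  deriving DecidableEq

/-- The first-order language of arithmetic `{0, 1, +, ·, <}`. -/
def arith : FirstOrder.Language := ⟨arithFunc, arithRel⟩

namespace Arith

variable {M : Type*} [arith.Structure M]

/-- The interpretation of `0`. -/
def zeroM (M : Type*) [arith.Structure M] : M :=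
  Structure.funMap (L := arith) arithFunc.zero ![]

/-- The interpretation of `1`. -/
def oneM (M : Type*) [arith.Structure M] : M :=
  Structure.funMap (L := arith) arithFunc.one ![]

/-- The interpretation of `+`. -/
def addM (x y : M) : M := Structure.funMap (L := arith) arithFunc.add ![x, y]

/-- The interpretation of `·`. -/
def mulM (x y : M) : M := Structure.funMap (L := arith) arithFunc.mul ![x, y]

/-- The interpretation of `<`. -/
def ltM (x y : M) : Prop := Structure.RelMap (L := arith) arithRel.lt ![x, y]

/-- Non-strict order. -/
def leM (x y : M) : Prop := ltM x y ∨ x = y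

/-- The numeral `n` in `M`: `0`, or `1 + 1 + ⋯ + 1`. -/
def numeral (M : Type*) [arith.Structure M] : ℕ → M
  | 0 => zeroM M
  | n + 1 => addM (numeral M n) (oneM M)

/-- The standard `arith`-structure on `ℕ`. -/
instance : arith.Structure ℕ where
  funMap {n} f v :=
    match f with
    | .zero => 0
    | .one => 1
    | .add => v 0 + v 1
    | .mul => v 0 * v 1
  RelMap {n} r v :=
    match r with
    | .lt => v 0 < v 1

/-- `M` is a model of Peano arithmetic: it satisfies the finitely many basic axioms of
`PA` together with induction for all parametrically definable sets (which is equivalent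
to the usual first-order induction scheme). -/
def IsPAModel (M : Type*) [arith.Structure M] : Prop :=
  (∀ x : M, addM x (zeroM M) = x) ∧
  (∀ x y : M, addM x (addM y (oneM M)) = addM (addM x y) (oneM M)) ∧
  (∀ x : M, mulM x (zeroM M) = zeroM M) ∧
  (∀ x y : M, mulM x (addM y (oneM M)) = addM (mulM x y) x) ∧
  (∀ x : M, ¬ ltM x (zeroM M)) ∧
  (∀ x y : M, ltM x (addM y (oneM M)) ↔ (ltM x y ∨ x = y)) ∧
  (∀ x : M, addM x (oneM M) ≠ zeroM M) ∧
  (∀ x y : M, addM x (oneM M) = addM y (oneM M) → x = y) ∧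
  (∀ s : Set M, Set.Definable₁ (Set.univ : Set M) arith s →
    zeroM M ∈ s → (∀ x ∈ s, addM x (oneM M) ∈ s) → ∀ x : M, x ∈ s)

/-- An element of `M` is standard if it is a numeral. -/
def IsStd (x : M) : Prop := ∃ n : ℕ, x = numeral M n

/-- `M` is a non-standard model of `PA`: a model of `PA` not isomorphic to the standard
model `ℕ`. -/
def NonstandardModel (M : Type*) [arith.Structure M] : Prop :=
  IsPAModel M ∧ ¬ Nonempty (M ≃[arith] ℕ)

/-- `(x)_i = 1`: the `i`-th binary digit of `x` is `1`, for standard `i`.  This is expressed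
by saying that `x = u·2^(i+1) + (2^i + v)` with `v < 2^i`, where `2^i`, `2^(i+1)` are
numerals. -/
def digitB (x : M) (i : ℕ) : Prop :=
  ∃ u v : M, x = addM (mulM u (numeral M (2 ^ (i + 1)))) (addM (numeral M (2 ^ i)) v) ∧
    ltM v (numeral M (2 ^ i))

/-- The standard system of `M`: the collection of subsets of `ℕ` coded by some
non-standard element of `M` (via its standard binary digits). -/
def SSy (M : Type*) [arith.Structure M] : Set (Set ℕ) :=
  {X | ∃ a : M, ¬ IsStd a ∧ ∀ i : ℕ, i ∈ X ↔ digitB a i}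

/-- A function `M → M` is definable (with parameters) if its graph is a definable set. -/
def DefinableFun₁ (f : M → M) : Prop :=
  Set.Definable (Set.univ : Set M) arith {v : Fin 2 → M | f (v 0) = v 1}

/-- A `k`-ary function `M^k → M` is definable (with parameters) if its graph is a
definable set. -/
def DefinableFun {k : ℕ} (F : (Fin k → M) → M) : Prop :=
  Set.Definable (Set.univ : Set M) arith
    {v : Fin (k + 1) → M | F (fun i => v i.castSucc) = v (Fin.last k)}

/-- `c` is the internal cardinality of the set `D ⊆ M`: there is an `M`-definable
bijection between `{x : x < c}` and `D`. -/
def InternalCard (D : Set M) (c : M) : Prop :=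
  ∃ f : M → M, DefinableFun₁ f ∧ Set.BijOn f {x : M | ltM x c} D

/-- `y = 2^x` in the model `M`, expressed via the existence of a definable function
satisfying the recursion of the base-`2` exponential up to `x`. -/
def IsPow2 (x y : M) : Prop :=
  ∃ f : M → M, DefinableFun₁ f ∧ f (zeroM M) = oneM M ∧
    (∀ z : M, ltM z x → f (addM z (oneM M)) = addM (f z) (f z)) ∧ f x = y

end Arith

namespace Arith

/-- Relativized partial recursiveness: `RecursiveIn O f` means the partial function `f`
is partial recursive in the total oracle `O`.  This mirrors `Nat.Partrec`, with an extra
constructor for the oracle. -/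
inductive RecursiveIn (O : ℕ → ℕ) : (ℕ →. ℕ) → Prop
  | zero : RecursiveIn O (pure 0)
  | succ : RecursiveIn O Nat.succ
  | left : RecursiveIn O ↑fun n : ℕ => n.unpair.1
  | right : RecursiveIn O ↑fun n : ℕ => n.unpair.2
  | oracle : RecursiveIn O O
  | pair {f g} : RecursiveIn O f → RecursiveIn O g →
      RecursiveIn O fun n => Nat.pair <$> f n <*> g n
  | comp {f g} : RecursiveIn O f → RecursiveIn O g → RecursiveIn O fun n => g n >>= f
  | prec {f g} : RecursiveIn O f → RecursiveIn O g → RecursiveIn O (Nat.unpaired fun a n =>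
      n.rec (f a) fun y IH => do let i ← IH; g (Nat.pair a (Nat.pair y i)))
  | rfind {f} : RecursiveIn O f →
      RecursiveIn O fun a => Nat.rfind fun n => (fun m => m = 0) <$> f (Nat.pair a n)

open Classical in
/-- The characteristic function of a set of natural numbers. -/
noncomputable def charFn (X : Set ℕ) : ℕ → ℕ := fun n => if n ∈ X then 1 else 0

/-- Turing reducibility between sets of natural numbers. -/
def TuringLE (Y X : Set ℕ) : Prop := RecursiveIn (charFn X) (charFn Y)

/-- The Turing join `X ⊕ Y = 2X ∪ (2Y + 1)`. -/
def turingJoin (X Y : Set ℕ) : Set ℕ :=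
  {n | ∃ m ∈ X, n = 2 * m} ∪ {n | ∃ m ∈ Y, n = 2 * m + 1}

/-- A Turing ideal: a collection of subsets of `ℕ` closed under Turing join and Turing
reducibility. -/
def TuringIdeal (S : Set (Set ℕ)) : Prop :=
  (∀ X ∈ S, ∀ Y ∈ S, turingJoin X Y ∈ S) ∧
  (∀ X ∈ S, ∀ Y : Set ℕ, TuringLE Y X → Y ∈ S)

/-- The Turing ideal generated by a collection of subsets of `ℕ`. -/
def tIdealGen (C : Set (Set ℕ)) : Set (Set ℕ) :=
  ⋂₀ {I | TuringIdeal I ∧ C ⊆ I}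

/-- `T ⊆ ℕ` codes a binary tree: the set of finite binary sequences whose codes lie in
`T` is closed under initial segments. -/
def IsBinTreeSet (T : Set ℕ) : Prop :=
  ∀ s : List Bool, Encodable.encode s ∈ T → ∀ t : List Bool, t <+: s → Encodable.encode t ∈ T

/-- The tree coded by `T` is infinite. -/
def TreeInf (T : Set ℕ) : Prop := {s : List Bool | Encodable.encode s ∈ T}.Infinite

/-- `P ⊆ ℕ`, viewed as an infinite branch via its characteristic function, is a path
through the tree coded by `T`. -/
def PathThrough (P T : Set ℕ) : Prop :=
  ∀ f : ℕ → Bool, (∀ i : ℕ, f i = true ↔ i ∈ P) →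
    ∀ m : ℕ, Encodable.encode (List.ofFn fun i : Fin m => f i) ∈ T

/-- A Scott set: a nonempty Turing ideal such that every infinite binary tree in it has
an infinite path in it. -/
def ScottSet (S : Set (Set ℕ)) : Prop :=
  S.Nonempty ∧ TuringIdeal S ∧
  ∀ T ∈ S, IsBinTreeSet T → TreeInf T → ∃ P ∈ S, PathThrough P T

open Classical in
/-- The characteristic function of a set, with values in `Bool`. -/
noncomputable def chi (X : Set ℕ) : ℕ → Bool := fun n => if n ∈ X then true else false

/-- The iterated Turing join `⊕_{i<k} X i`. -/
def joinMany : {k : ℕ} → (Fin k → Set ℕ) → Set ℕ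
  | 0, _ => ∅
  | (k + 1), X => turingJoin (joinMany fun i => X i.castSucc) (X (Fin.last k))

end Arith

namespace Arith

section Definability

variable {M : Type*} [arith.Structure M] {α β : Type*} {n : ℕ}

/-- `P` is definable with parameters in `M`, as a predicate on tuples of elements of `M`. -/
def DefinablePred (P : (α → M) → Prop) : Prop :=
  (Set.univ : Set M).Definable arith {v | P v}

/-- `t` is definable with parameters in `M`, as a function on tuples of elements of `M`. -/
abbrev DefinableTerm (t : (α → M) → M) : Prop :=
  (Set.univ : Set M).DefinableFun arith t

namespace DefinableTerm

variable {s t : (α → M) → M}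

theorem var (i : α) : DefinableTerm fun v : α → M => v i :=
  .proj arith

theorem const (c : M) : DefinableTerm fun _ : α → M => c :=
  arith.definableFun_const α (Set.mem_univ c)

theorem comp₂ {g : (Fin 2 → M) → M} (hg : DefinableTerm g) (hs : DefinableTerm s)
    (ht : DefinableTerm t) : DefinableTerm fun v => g ![s v, t v] :=
  hg.comp (g := fun v => ![s v, t v]) (Fin.forall_fin_two.2 ⟨hs, ht⟩)

theorem add (hs : DefinableTerm s) (ht : DefinableTerm t) :
    DefinableTerm fun v => addM (s v) (t v) :=
  comp₂ (.of_empty (.fun_symbol (L := arith) (n := 2) arithFunc.add)) hs ht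

theorem mul (hs : DefinableTerm s) (ht : DefinableTerm t) :
    DefinableTerm fun v => mulM (s v) (t v) :=
  comp₂ (.of_empty (.fun_symbol (L := arith) (n := 2) arithFunc.mul)) hs ht

end DefinableTerm

theorem DefinableFun₁.comp {f : M → M} (hf : DefinableFun₁ f) {t : (α → M) → M}
    (ht : DefinableTerm t) : DefinableTerm fun v => f (t v) := by
  have hf' : DefinableTerm fun w : Unit → M => f (w ()) :=
    Set.Definable.preimage_comp ![some (), none] hf
  exact hf'.comp (g := fun v _ => t v) fun _ => ht

variable {P Q : (α → M) → Prop} {s t : (α → M) → M}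

theorem DefinablePred.and (hP : DefinablePred P) (hQ : DefinablePred Q) :
    DefinablePred fun v => P v ∧ Q v :=
  Set.Definable.inter hP hQ

theorem DefinablePred.not (hP : DefinablePred P) : DefinablePred fun v => ¬ P v :=
  Set.Definable.compl hP

theorem DefinablePred.or (hP : DefinablePred P) (hQ : DefinablePred Q) :
    DefinablePred fun v => P v ∨ Q v :=
  Set.Definable.union hP hQ

theorem DefinablePred.imp (hP : DefinablePred P) (hQ : DefinablePred Q) :
    DefinablePred fun v => P v → Q v := by
  simpa only [imp_iff_not_or] using hP.not.or hQ

theorem DefinablePred.forall_finite {ι : Type*} [Finite ι] {P : ι → (α → M) → Prop}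
    (hP : ∀ i, DefinablePred (P i)) : DefinablePred fun v => ∀ i, P i v := by
  simpa only [DefinablePred, Set.ofPred_forall] using Set.definable_iInter_of_finite hP

theorem DefinablePred.reindex (hP : DefinablePred P) (σ : α → β) :
    DefinablePred fun v : β → M => P (v ∘ σ) :=
  Set.Definable.preimage_comp σ hP

theorem DefinablePred.cons {P : (Fin (n + 1) → M) → Prop} (hP : DefinablePred P) (i : α)
    (σ : Fin n → α) : DefinablePred fun v : α → M => P (Fin.cons (v i) (v ∘ σ)) := by
  simpa only [Fin.comp_cons] using hP.reindex (Fin.cons i σ)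

theorem DefinablePred.exists {R : (Fin n → M) → M → Prop}
    (hR : DefinablePred fun w : Fin (n + 1) → M => R (Fin.tail w) (w 0)) :
    DefinablePred fun v => ∃ y, R v y := by
  refine (congrArg _ (Set.ext fun v => ?_)).mp (Set.Definable.image_comp hR Fin.succ)
  constructor
  · rintro ⟨w, hw, rfl⟩
    exact ⟨w 0, hw⟩
  · rintro ⟨y, hy⟩
    exact ⟨Fin.cons y v, hy, rfl⟩

theorem DefinablePred.forall {R : (Fin n → M) → M → Prop}
    (hR : DefinablePred fun w : Fin (n + 1) → M => R (Fin.tail w) (w 0)) :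
    DefinablePred fun v => ∀ y, R v y := by
  simpa only [not_exists, not_not] using
    (DefinablePred.exists (R := fun v y => ¬ R v y) hR.not).not

theorem DefinablePred.eq (hs : DefinableTerm s) (ht : DefinableTerm t) :
    DefinablePred fun v => s v = t v :=
  hs.ofPred_eq ht

theorem DefinablePred.lt (hs : DefinableTerm s) (ht : DefinableTerm t) :
    DefinablePred fun v => ltM (s v) (t v) := by
  have hlt : (Set.univ : Set M).Definable arith
      {w : Fin 2 → M | Structure.RelMap (L := arith) arithRel.lt w} :=
    (Set.empty_definable_iff.2 ⟨Relations.formula (L := arith) (n := 2) arithRel.lt Term.var,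
      Set.ext fun _ => Formula.realize_rel.symm⟩).mono (Set.empty_subset _)
  exact hlt.preimage_map (F := fun v => ![s v, t v]) (Fin.forall_fin_two.2 ⟨hs, ht⟩)

end Definability

end Arith


namespace Arith

namespace IsPAModel

variable {M : Type*} [arith.Structure M]

theorem add_zero (hM : IsPAModel M) (x : M) : addM x (zeroM M) = x := hM.1 x

theorem add_succ (hM : IsPAModel M) (x y : M) :
    addM x (addM y (oneM M)) = addM (addM x y) (oneM M) := hM.2.1 x y

theorem mul_zero (hM : IsPAModel M) (x : M) : mulM x (zeroM M) = zeroM M := hM.2.2.1 x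

theorem mul_succ (hM : IsPAModel M) (x y : M) :
    mulM x (addM y (oneM M)) = addM (mulM x y) x := hM.2.2.2.1 x y

theorem not_lt_zero (hM : IsPAModel M) (x : M) : ¬ ltM x (zeroM M) := hM.2.2.2.2.1 x

theorem lt_succ (hM : IsPAModel M) (x y : M) :
    ltM x (addM y (oneM M)) ↔ ltM x y ∨ x = y := hM.2.2.2.2.2.1 x y

theorem succ_ne_zero (hM : IsPAModel M) (x : M) : addM x (oneM M) ≠ zeroM M :=
  hM.2.2.2.2.2.2.1 x

theorem succ_inj (hM : IsPAModel M) {x y : M} (h : addM x (oneM M) = addM y (oneM M)) : x = y :=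
  hM.2.2.2.2.2.2.2.1 x y h

theorem induction (hM : IsPAModel M) {P : M → Prop}
    (hP : DefinablePred fun v : Fin 1 → M => P (v 0)) (zero : P (zeroM M))
    (succ : ∀ x, P x → P (addM x (oneM M))) (x : M) : P x :=
  hM.2.2.2.2.2.2.2.2 {x | P x} hP zero succ x

theorem eq_zero_or_eq_succ (hM : IsPAModel M) (x : M) : x = zeroM M ∨ ∃ y, x = addM y (oneM M) :=
  hM.induction (P := fun x => x = zeroM M ∨ ∃ y, x = addM y (oneM M))
    (.or (.eq (.var 0) (.const _)) (.exists (.eq (.var 1) (.add (.var 0) (.const _)))))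
    (.inl rfl) (fun x _ => .inr ⟨x, rfl⟩) x

theorem numeral_add (hM : IsPAModel M) (m n : ℕ) :
    addM (numeral M m) (numeral M n) = numeral M (m + n) := by
  induction n with
  | zero => exact hM.add_zero _
  | succ n ih => rw [numeral, hM.add_succ, ih]; rfl

theorem numeral_mul (hM : IsPAModel M) (m n : ℕ) :
    mulM (numeral M m) (numeral M n) = numeral M (m * n) := by
  induction n with
  | zero => exact hM.mul_zero _
  | succ n ih => rw [numeral, hM.mul_succ, ih, hM.numeral_add, Nat.mul_succ]

theorem numeral_injective (hM : IsPAModel M) : Function.Injective (numeral M) := by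
  intro m
  induction m with
  | zero =>
    rintro (_ | n) h
    · rfl
    · exact absurd h.symm (hM.succ_ne_zero _)
  | succ m ih =>
    rintro (_ | n) h
    · exact absurd h (hM.succ_ne_zero _)
    · rw [ih (hM.succ_inj h)]

theorem lt_numeral_iff (hM : IsPAModel M) {x : M} {n : ℕ} :
    ltM x (numeral M n) ↔ ∃ j < n, x = numeral M j := by
  induction n with
  | zero => simpa [numeral] using hM.not_lt_zero x
  | succ n ih =>
    rw [numeral, hM.lt_succ, ih]
    constructor
    · rintro (⟨j, hj, rfl⟩ | rfl)
      exacts [⟨j, by omega, rfl⟩, ⟨n, by omega, rfl⟩]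
    · rintro ⟨j, hj, rfl⟩
      rcases Nat.lt_succ_iff_lt_or_eq.1 hj with h | rfl
      exacts [.inl ⟨j, h, rfl⟩, .inr rfl]

theorem numeral_lt_numeral (hM : IsPAModel M) {m n : ℕ} :
    ltM (numeral M m) (numeral M n) ↔ m < n := by
  simp [hM.lt_numeral_iff, hM.numeral_injective.eq_iff]

theorem numeral_lt_of_not_isStd (hM : IsPAModel M) {y : M} (hy : ¬ IsStd y) (n : ℕ) :
    ltM (numeral M n) y := by
  have dichotomy : ltM (numeral M n) y ∨ ltM y (numeral M (n + 1)) := by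
    refine hM.induction (P := fun y => ltM (numeral M n) y ∨ ltM y (numeral M (n + 1)))
      (.or (.lt (.const _) (.var 0)) (.lt (.var 0) (.const _)))
      (.inr (hM.numeral_lt_numeral.2 n.succ_pos)) (fun x hx => ?_) y
    rcases hx with hx | hx
    · exact .inl ((hM.lt_succ _ _).2 (.inl hx))
    · obtain ⟨j, hj, rfl⟩ := hM.lt_numeral_iff.1 hx
      rcases Nat.lt_succ_iff_lt_or_eq.1 hj with hj | rfl
      · exact .inr (hM.numeral_lt_numeral.2 (Nat.succ_lt_succ hj))
      · exact .inl (hM.numeral_lt_numeral.2 j.lt_succ_self)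
  refine dichotomy.resolve_right fun h => hy ?_
  obtain ⟨j, -, rfl⟩ := hM.lt_numeral_iff.1 h
  exact ⟨j, rfl⟩

theorem isStd_right_of_add_eq_numeral (hM : IsPAModel M) {x y : M} {n : ℕ}
    (h : addM x y = numeral M n) : IsStd y := by
  induction n generalizing y with
  | zero =>
    rcases hM.eq_zero_or_eq_succ y with rfl | ⟨y, rfl⟩
    · exact ⟨0, rfl⟩
    · rw [hM.add_succ] at h
      exact absurd h (hM.succ_ne_zero _)
  | succ n ih =>
    rcases hM.eq_zero_or_eq_succ y with rfl | ⟨y, rfl⟩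
    · exact ⟨0, rfl⟩
    · rw [hM.add_succ] at h
      obtain ⟨j, rfl⟩ := ih (hM.succ_inj h)
      exact ⟨j + 1, rfl⟩

theorem isStd_of_add_numeral_eq_numeral (hM : IsPAModel M) {x : M} {m n : ℕ}
    (h : addM x (numeral M m) = numeral M n) : IsStd x := by
  induction m generalizing n with
  | zero => exact ⟨n, (hM.add_zero x).symm.trans h⟩
  | succ m ih =>
    rw [numeral, hM.add_succ] at h
    cases n with
    | zero => exact absurd h (hM.succ_ne_zero _)
    | succ n => exact ih (hM.succ_inj h)

theorem isStd_of_mul_numeral_succ (hM : IsPAModel M) {x : M} {m : ℕ}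
    (h : IsStd (mulM x (numeral M (m + 1)))) : IsStd x := by
  obtain ⟨n, hn⟩ := h
  rw [numeral, hM.mul_succ] at hn
  exact hM.isStd_right_of_add_eq_numeral hn

theorem overspill (hM : IsPAModel M) {a : M} (ha : ¬ IsStd a) {P : M → Prop}
    (hP : DefinablePred fun v : Fin 1 → M => P (v 0)) (h : ∀ n, P (numeral M n)) :
    ∃ m, ¬ IsStd m ∧ P m := by
  by_contra! hstd
  refine ha (by_contra fun ha' => hstd a ha' (hM.induction hP (h 0) (fun x hx => ?_) a))
  obtain ⟨n, rfl⟩ : IsStd x := by_contra fun hx' => hstd x hx' hx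
  exact h (n + 1)

end IsPAModel

theorem testBit_iff_exists_eq_add {n i : ℕ} :
    n.testBit i ↔ ∃ u v, n = u * 2 ^ (i + 1) + (2 ^ i + v) ∧ v < 2 ^ i := by
  rw [Nat.testBit_eq_decide_div_mod_eq, decide_eq_true_iff]
  have hpos : 0 < 2 ^ i := by positivity
  constructor
  · intro hodd
    refine ⟨n / 2 ^ i / 2, n % 2 ^ i, ?_, Nat.mod_lt _ hpos⟩
    calc n = 2 ^ i * (n / 2 ^ i) + n % 2 ^ i := (Nat.div_add_mod _ _).symm
      _ = 2 ^ i * (2 * (n / 2 ^ i / 2) + 1) + n % 2 ^ i := by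
          rw [Nat.two_mul_div_two_add_one_of_odd (Nat.odd_iff.2 hodd)]
      _ = n / 2 ^ i / 2 * 2 ^ (i + 1) + (2 ^ i + n % 2 ^ i) := by ring
  · rintro ⟨u, v, rfl, hv⟩
    rw [show u * 2 ^ (i + 1) + (2 ^ i + v) = v + 2 ^ i * (2 * u + 1) by ring,
      Nat.add_mul_div_left _ _ hpos, Nat.div_eq_of_lt hv]
    omega

theorem IsPAModel.digitB_numeral_iff_testBit {M : Type*} [arith.Structure M] (hM : IsPAModel M)
    (n i : ℕ) : digitB (numeral M n) i ↔ n.testBit i := by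
  rw [testBit_iff_exists_eq_add]
  constructor
  · rintro ⟨u, v, h, hv⟩
    obtain ⟨v, hv', rfl⟩ := hM.lt_numeral_iff.1 hv
    rw [hM.numeral_add] at h
    obtain ⟨N, hN⟩ := Nat.exists_eq_succ_of_ne_zero (Nat.two_pow_pos (i + 1)).ne'
    obtain ⟨u, rfl⟩ : IsStd u :=
      hM.isStd_of_mul_numeral_succ (hN ▸ hM.isStd_of_add_numeral_eq_numeral h.symm)
    rw [hM.numeral_mul, hM.numeral_add] at h
    exact ⟨u, v, hM.numeral_injective h, hv'⟩
  · rintro ⟨u, v, rfl, hv⟩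
    refine ⟨numeral M u, numeral M v, ?_, hM.numeral_lt_numeral.2 hv⟩
    rw [hM.numeral_mul, hM.numeral_add, hM.numeral_add]

end Arith


namespace Arith

section Representability

variable {M : Type*} [arith.Structure M] {n k : ℕ}

/-- `P` is represented in `M`: a predicate definable with parameters agrees with `P` when the
natural number arguments are replaced by numerals. The argument of `P` in `M` is coordinate `0` of
the defining predicate. -/
def Representable (P : (Fin n → ℕ) → M → Prop) : Prop :=
  ∃ Q : (Fin (n + 1) → M) → Prop, DefinablePred Q ∧
    ∀ u y, Q (Fin.cons y (numeral M ∘ u)) ↔ P u y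

variable (M) in
/-- The function `f` is represented in `M`: its graph, as a relation between tuples of natural
numbers and all elements of `M`, is representable. In particular, the defining predicate has no
nonstandard value at standard arguments. -/
def RepresentableFun (f : (Fin n → ℕ) → ℕ) : Prop :=
  Representable fun u (y : M) => y = numeral M (f u)

variable {P Q : (Fin n → ℕ) → M → Prop} {s t : (Fin n → ℕ) → ℕ}

theorem Representable.of_iff (hP : Representable P) (h : ∀ u y, P u y ↔ Q u y) :
    Representable Q :=
  (funext₂ fun u y => propext (h u y) : P = Q) ▸ hP

theorem Representable.and (hP : Representable P) (hQ : Representable Q) :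
    Representable fun u y => P u y ∧ Q u y := by
  obtain ⟨P', hP', hPP'⟩ := hP
  obtain ⟨Q', hQ', hQQ'⟩ := hQ
  exact ⟨_, hP'.and hQ', fun u y => and_congr (hPP' u y) (hQQ' u y)⟩

theorem Representable.not (hP : Representable P) : Representable fun u y => ¬ P u y := by
  obtain ⟨P', hP', hPP'⟩ := hP
  exact ⟨_, hP'.not, fun u y => not_congr (hPP' u y)⟩

theorem Representable.imp (hP : Representable P) (hQ : Representable Q) :
    Representable fun u y => P u y → Q u y := by
  simpa only [not_and_not_right] using (hP.and hQ.not).not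

theorem Representable.iff (hP : Representable P) (hQ : Representable Q) :
    Representable fun u y => P u y ↔ Q u y := by
  simpa only [iff_iff_implies_and_implies] using (hP.imp hQ).and (hQ.imp hP)

theorem Representable.forall_finite {ι : Type*} [Finite ι] {P : ι → (Fin n → ℕ) → M → Prop}
    (hP : ∀ i, Representable (P i)) : Representable fun u y => ∀ i, P i u y := by
  choose P' hP' hPP' using hP
  exact ⟨_, .forall_finite hP', fun u y => forall_congr' fun i => hPP' i u y⟩

theorem Representable.exists (hP : Representable P) :
    Representable fun u (_ : M) => ∃ y, P u y := by
  obtain ⟨P', hP', hPP'⟩ := hP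
  exact ⟨fun w => ∃ y, P' (Fin.cons y (Fin.tail w)), .exists (hP'.cons 0 fun i => i.succ.succ),
    fun u _ => exists_congr fun y => hPP' u y⟩

theorem Representable.exists_lt (hM : IsPAModel M) {P : (Fin n → ℕ) → ℕ → M → Prop}
    (ht : RepresentableFun M t)
    (hP : Representable fun (u : Fin (n + 1) → ℕ) y => P (Fin.tail u) (u 0) y) :
    Representable fun u y => ∃ j < t u, P u j y := by
  obtain ⟨T, hT, hTt⟩ := ht
  obtain ⟨P', hP', hPP'⟩ := hP
  refine ⟨fun w => ∃ b, T (Fin.cons b (Fin.tail w)) ∧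
    ∃ z, ltM z b ∧ P' (Fin.cons (w 0) (Fin.cons z (Fin.tail w))), ?_, fun u y => ?_⟩
  · refine .exists (.and (hT.cons 0 fun i => i.succ.succ)
      (.exists (.and (.lt (.var 0) (.var 1)) ?_)))
    have h := hP'.cons 2 (Fin.cons 0 fun i => i.succ.succ.succ)
    simp only [Fin.comp_cons] at h
    exact h
  · have hP_numeral (j : ℕ) :
        P' (Fin.cons y (Fin.cons (numeral M j) (numeral M ∘ u))) ↔ P u j y := by
      rw [← Fin.comp_cons]
      exact hPP' (Fin.cons j u) y
    simp only [Fin.tail_cons, Fin.cons_zero, hTt, exists_eq_left, hM.lt_numeral_iff]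
    constructor
    · rintro ⟨_, ⟨j, hj, rfl⟩, h⟩
      exact ⟨j, hj, (hP_numeral j).1 h⟩
    · rintro ⟨j, hj, h⟩
      exact ⟨_, ⟨j, hj, rfl⟩, (hP_numeral j).2 h⟩

theorem Representable.forall_lt (hM : IsPAModel M) {P : (Fin n → ℕ) → ℕ → M → Prop}
    (ht : RepresentableFun M t)
    (hP : Representable fun (u : Fin (n + 1) → ℕ) y => P (Fin.tail u) (u 0) y) :
    Representable fun u y => ∀ j < t u, P u j y := by
  simpa using (exists_lt hM (P := fun u j y => ¬ P u j y) ht hP.not).not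

theorem Representable.comp {P : (Fin k → ℕ) → M → Prop} (hP : Representable P)
    {t : Fin k → (Fin n → ℕ) → ℕ} (ht : ∀ i, RepresentableFun M (t i)) :
    Representable fun u y => P (fun i => t i u) y := by
  obtain ⟨P', hP', hPP'⟩ := hP
  choose T hT hTt using ht
  refine ⟨fun w => ∃ v : Fin k → M, (∀ i, T i (Fin.cons (v i) (Fin.tail w))) ∧
    P' (Fin.cons (w 0) v), ?_, fun u y => ?_⟩
  · exact Set.Definable.exists_of_finite
      (S := {w : Fin (n + 1) ⊕ Fin k → M |
        (∀ i, T i (Fin.cons (w (.inr i)) fun j => w (.inl j.succ))) ∧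
          P' (Fin.cons (w (.inl 0)) fun i => w (.inr i))})
      (DefinablePred.and (.forall_finite fun i => (hT i).cons (Sum.inr i) fun j => Sum.inl j.succ)
        (hP'.cons (Sum.inl 0) Sum.inr))
  · simp only [Fin.tail_cons, hTt, Fin.cons_zero, ← hPP' _ y]
    constructor
    · rintro ⟨v, hv, h⟩
      rwa [funext hv] at h
    · exact fun h => ⟨_, fun _ => rfl, h⟩

theorem Representable.comp₁ {P : ℕ → M → Prop} (hP : Representable fun u : Fin 1 → ℕ => P (u 0))
    (ht : RepresentableFun M t) : Representable fun u y => P (t u) y :=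
  hP.comp (t := fun _ => t) fun _ => ht

theorem Representable.comp₂ {P : ℕ → ℕ → M → Prop}
    (hP : Representable fun u : Fin 2 → ℕ => P (u 0) (u 1))
    (hs : RepresentableFun M s) (ht : RepresentableFun M t) :
    Representable fun u y => P (s u) (t u) y :=
  hP.comp (t := ![s, t]) (Fin.forall_fin_two.2 ⟨hs, ht⟩)

theorem Representable.lt (hM : IsPAModel M) (hs : RepresentableFun M s)
    (ht : RepresentableFun M t) : Representable fun u (_ : M) => s u < t u :=
  comp₂ (P := fun i j _ => i < j)
    ⟨_, .lt (.var 1) (.var 2), fun _ _ => hM.numeral_lt_numeral⟩ hs ht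

theorem Representable.eq (hM : IsPAModel M) (hs : RepresentableFun M s)
    (ht : RepresentableFun M t) : Representable fun u (_ : M) => s u = t u :=
  comp₂ (P := fun i j _ => i = j)
    ⟨_, .eq (.var 1) (.var 2), fun _ _ => hM.numeral_injective.eq_iff⟩ hs ht

theorem Representable.exists_forall (hM : IsPAModel M) {a : M} (ha : ¬ IsStd a) {P : ℕ → M → Prop}
    (hP : Representable fun u : Fin 1 → ℕ => P (u 0)) (h : ∀ m, ∃ y, ∀ i < m, P i y) :
    ∃ y, ∀ i, P i y := by
  obtain ⟨P', hP', hPP'⟩ := hP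
  have finite_case (m : ℕ) : ∃ y, ∀ i, ltM i (numeral M m) → P' (Fin.cons y fun _ => i) := by
    obtain ⟨y, hy⟩ := h m
    refine ⟨y, fun i hi => ?_⟩
    obtain ⟨j, hj, rfl⟩ := hM.lt_numeral_iff.1 hi
    exact (hPP' (fun _ => j) y).2 (hy j hj)
  obtain ⟨m, hm, y, hy⟩ :=
    hM.overspill ha (P := fun m => ∃ y, ∀ i, ltM i m → P' (Fin.cons y fun _ => i))
      (.exists (.forall (.imp (.lt (.var 0) (.var 2)) (hP'.cons 1 fun _ => 0)))) finite_case
  exact ⟨y, fun i => (hPP' (fun _ => i) y).1 (hy _ (hM.numeral_lt_of_not_isStd hm i))⟩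

end Representability

section RepresentableFun

variable {M : Type*} [arith.Structure M] {n : ℕ} {s t : (Fin n → ℕ) → ℕ}

theorem RepresentableFun.comp₁ {g : ℕ → ℕ} (hg : RepresentableFun M fun u : Fin 1 → ℕ => g (u 0))
    (ht : RepresentableFun M t) : RepresentableFun M fun u => g (t u) :=
  Representable.comp₁ (P := fun i y => y = numeral M (g i)) hg ht

theorem RepresentableFun.comp₂ {g : ℕ → ℕ → ℕ}
    (hg : RepresentableFun M fun u : Fin 2 → ℕ => g (u 0) (u 1)) (hs : RepresentableFun M s)
    (ht : RepresentableFun M t) : RepresentableFun M fun u => g (s u) (t u) :=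
  Representable.comp₂ (P := fun i j y => y = numeral M (g i j)) hg hs ht

theorem RepresentableFun.var (i : Fin n) : RepresentableFun M fun u => u i :=
  ⟨_, .eq (.var 0) (.var i.succ), fun _ _ => Iff.rfl⟩

theorem RepresentableFun.const (c : ℕ) : RepresentableFun M fun _ : Fin n → ℕ => c :=
  ⟨_, .eq (.var 0) (.const (numeral M c)), fun _ _ => Iff.rfl⟩

theorem RepresentableFun.add (hM : IsPAModel M) (hs : RepresentableFun M s)
    (ht : RepresentableFun M t) : RepresentableFun M fun u => s u + t u :=
  comp₂ (g := (· + ·)) ⟨_, .eq (.var 0) (.add (.var 1) (.var 2)),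
    fun u y => iff_of_eq (congrArg (y = ·) (hM.numeral_add (u 0) (u 1)))⟩ hs ht

theorem RepresentableFun.mul (hM : IsPAModel M) (hs : RepresentableFun M s)
    (ht : RepresentableFun M t) : RepresentableFun M fun u => s u * t u :=
  comp₂ (g := (· * ·)) ⟨_, .eq (.var 0) (.mul (.var 1) (.var 2)),
    fun u y => iff_of_eq (congrArg (y = ·) (hM.numeral_mul (u 0) (u 1)))⟩ hs ht

theorem RepresentableFun.of_isLeast (hM : IsPAModel M) {P : (Fin n → ℕ) → ℕ → Prop}
    (hP : Representable fun (u : Fin (n + 1) → ℕ) (_ : M) => P (Fin.tail u) (u 0))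
    (ht : ∀ u, IsLeast {j | P u j} (t u)) : RepresentableFun M t := by
  obtain ⟨P', hP', hPP'⟩ := hP
  have hP_numeral (u : Fin n → ℕ) (j : ℕ) (x : M) :
      P' (Fin.cons x (Fin.cons (numeral M j) (numeral M ∘ u))) ↔ P u j := by
    rw [← Fin.comp_cons]
    exact hPP' (Fin.cons j u) x
  let R (v : Fin n → M) (y : M) : Prop := P' (Fin.cons y (Fin.cons y v))
  refine ⟨fun w => R (Fin.tail w) (w 0) ∧ ∀ z, ltM z (w 0) → ¬ R (Fin.tail w) z, ?_, ?_⟩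
  · have hR (i : Fin (n + 2)) :
        DefinablePred fun w : Fin (n + 2) → M => R (fun j => w j.succ.succ) (w i) := by
      have h := hP'.cons i (Fin.cons i fun j => j.succ.succ)
      simp only [Fin.comp_cons] at h
      exact h
    refine .and ?_ (.forall (.imp (.lt (.var 0) (.var 1)) (hR 0).not))
    exact (hR 0).reindex (Fin.cons 0 (Fin.cons 0 Fin.succ))
  · intro u y
    simp only [Fin.tail_cons, Fin.cons_zero, R]
    constructor
    · rintro ⟨hy, hmin⟩
      obtain ⟨j, rfl⟩ : IsStd y := by
        by_contra hy'
        exact hmin _ (hM.numeral_lt_of_not_isStd hy' _) ((hP_numeral u _ _).2 (ht u).1)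
      refine congrArg _ (le_antisymm (not_lt.1 fun hlt => ?_) ((ht u).2 ((hP_numeral u j _).1 hy)))
      exact hmin _ (hM.numeral_lt_numeral.2 hlt) ((hP_numeral u _ _).2 (ht u).1)
    · rintro rfl
      refine ⟨(hP_numeral u _ _).2 (ht u).1, fun z hz hPz => ?_⟩
      obtain ⟨j, hj, rfl⟩ := hM.lt_numeral_iff.1 hz
      exact hj.not_ge ((ht u).2 ((hP_numeral u j _).1 hPz))

theorem RepresentableFun.of_graph (hM : IsPAModel M)
    (h : Representable fun (u : Fin (n + 1) → ℕ) (_ : M) => u 0 = t (Fin.tail u)) :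
    RepresentableFun M t :=
  of_isLeast hM (P := fun u j => j = t u) h fun _ => isLeast_singleton

theorem RepresentableFun.natPair (hM : IsPAModel M) (hs : RepresentableFun M s)
    (ht : RepresentableFun M t) : RepresentableFun M fun u => Nat.pair (s u) (t u) := by
  refine comp₂ (of_graph hM ?_) hs ht
  have hlt : Representable fun (u : Fin 3 → ℕ) (_ : M) => u 1 < u 2 := .lt hM (.var 1) (.var 2)
  refine ((hlt.imp (.eq hM (.var 0) (.add hM (.mul hM (.var 2) (.var 2)) (.var 1)))).and
    (hlt.not.imp (.eq hM (.var 0)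
      (.add hM (.add hM (.mul hM (.var 1) (.var 1)) (.var 1)) (.var 2))))).of_iff fun u _ => ?_
  simp only [Nat.pair, Fin.tail, Fin.isValue, Fin.succ_zero_eq_one, Fin.succ_one_eq_two]
  split_ifs with h <;> simp [h]

theorem RepresentableFun.unpair_fst (hM : IsPAModel M) (ht : RepresentableFun M t) :
    RepresentableFun M fun u => (Nat.unpair (t u)).1 := by
  refine comp₁ (g := fun x => (Nat.unpair x).1)
    (of_isLeast hM (P := fun u j => ∃ z < u 0 + 1, u 0 = Nat.pair j z) ?_ fun u => ⟨?_, ?_⟩) ht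
  · exact .exists_lt hM (P := fun u z _ => u 1 = Nat.pair (u 0) z) (.add hM (.var 1) (.const 1))
      (.eq hM (.var 2) (.natPair hM (.var 1) (.var 0)))
  · exact ⟨_, Nat.lt_succ_of_le (Nat.unpair_right_le _), (Nat.pair_unpair _).symm⟩
  · rintro j ⟨z, -, h⟩
    simp only [h, Nat.unpair_pair, le_refl]

theorem RepresentableFun.unpair_snd (hM : IsPAModel M) (ht : RepresentableFun M t) :
    RepresentableFun M fun u => (Nat.unpair (t u)).2 := by
  refine comp₁ (g := fun x => (Nat.unpair x).2) (of_graph hM ?_) ht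
  refine (Representable.eq hM (.var 1)
    (.natPair hM (.unpair_fst hM (.var 1)) (.var 0))).of_iff fun u _ => ?_
  change u 1 = Nat.pair (Nat.unpair (u 1)).1 (u 0) ↔ u 0 = (Nat.unpair (u 1)).2
  constructor
  · intro h
    rw [h, Nat.unpair_pair]
  · intro h
    rw [h, Nat.pair_unpair]

theorem RepresentableFun.mod_succ (hM : IsPAModel M) (hs : RepresentableFun M s)
    (ht : RepresentableFun M t) : RepresentableFun M fun u => s u % (t u + 1) := by
  refine comp₂ (g := fun x y => x % (y + 1)) (of_isLeast hM
    (P := fun u j => ∃ q < u 0 + 1, u 0 = (u 1 + 1) * q + j) ?_ fun u => ⟨?_, ?_⟩) hs ht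
  · exact .exists_lt hM (P := fun u q _ => u 1 = (u 2 + 1) * q + u 0)
      (.add hM (.var 1) (.const 1))
      (.eq hM (.var 2) (.add hM (.mul hM (.add hM (.var 3) (.const 1)) (.var 0)) (.var 1)))
  · exact ⟨u 0 / (u 1 + 1), Nat.lt_succ_of_le (Nat.div_le_self _ _), (Nat.div_add_mod _ _).symm⟩
  · rintro j ⟨q, -, h⟩
    rw [h, Nat.mul_add_mod]
    exact Nat.mod_le _ _

theorem RepresentableFun.natBeta (hM : IsPAModel M) (hs : RepresentableFun M s)
    (ht : RepresentableFun M t) : RepresentableFun M fun u => Nat.beta (s u) (t u) :=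
  mod_succ hM (unpair_fst hM hs) (mul hM (add hM ht (const 1)) (unpair_snd hM hs))

theorem exists_natBeta_eq (r : ℕ → ℕ) (n : ℕ) : ∃ s, ∀ i ≤ n, Nat.beta s i = r i :=
  ⟨Nat.unbeta ((List.range (n + 1)).map r), fun i hi => by
    simpa using Nat.beta_unbeta_coe ((List.range (n + 1)).map r)
      ⟨i, by simpa using Nat.lt_succ_of_le hi⟩⟩

theorem RepresentableFun.natRec (hM : IsPAModel M) {f : ℕ → ℕ} {g : ℕ → ℕ → ℕ → ℕ}
    (hf : RepresentableFun M fun u : Fin 1 → ℕ => f (u 0))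
    (hg : RepresentableFun M fun u : Fin 3 → ℕ => g (u 0) (u 1) (u 2)) :
    RepresentableFun M fun u : Fin 2 → ℕ =>
      Nat.rec (motive := fun _ => ℕ) (f (u 0)) (g (u 0)) (u 1) := by
  classical
  let r (z i : ℕ) : ℕ := Nat.rec (f z) (g z) i
  let IsTrace (u : Fin 2 → ℕ) (s : ℕ) : Prop :=
    Nat.beta s 0 = f (u 0) ∧ ∀ i < u 1, Nat.beta s (i + 1) = g (u 0) i (Nat.beta s i)
  have exists_trace (u : Fin 2 → ℕ) : ∃ s, IsTrace u s := by
    obtain ⟨s, hs⟩ := exists_natBeta_eq (r (u 0)) (u 1)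
    exact ⟨s, hs 0 (Nat.zero_le _), fun i hi => by rw [hs (i + 1) hi, hs i hi.le]⟩
  have beta_eq {u : Fin 2 → ℕ} {s : ℕ} (hs : IsTrace u s) :
      ∀ i ≤ u 1, Nat.beta s i = r (u 0) i := by
    intro i
    induction i with
    | zero => exact fun _ => hs.1
    | succ i ih => exact fun hi => by rw [hs.2 i hi, ih (Nat.le_of_succ_le hi)]
  have htrace : Representable fun (u : Fin 3 → ℕ) (_ : M) => IsTrace (Fin.tail u) (u 0) := by
    refine .and (.eq hM (.natBeta hM (.var 0) (.const 0)) (.comp₁ hf (.var 1)))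
      (.forall_lt hM (P := fun u i _ => Nat.beta (u 0) (i + 1) = g (u 1) i (Nat.beta (u 0) i))
        (.var 2) (.eq hM (.natBeta hM (.var 1) (.add hM (.var 0) (.const 1))) ?_))
    exact Representable.comp (P := fun u y => y = numeral M (g (u 0) (u 1) (u 2))) hg
      (t := ![fun u => u 2, fun u => u 0, fun u => Nat.beta (u 1) (u 0)])
      (by simpa [Fin.forall_fin_succ] using ⟨.var 2, .var 0, .natBeta hM (.var 1) (.var 0)⟩)
  have hleast : RepresentableFun M fun u => Nat.find (exists_trace u) :=
    of_isLeast hM htrace fun u => Nat.isLeast_find (exists_trace u)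
  exact (natBeta hM hleast (.var 1)).of_iff fun u y => iff_of_eq
    (congrArg (y = numeral M ·) (beta_eq (Nat.find_spec (exists_trace u)) _ le_rfl))

theorem RepresentableFun.of_natPrimrec (hM : IsPAModel M) {f : ℕ → ℕ} (hf : Nat.Primrec f) :
    RepresentableFun M fun u : Fin 1 → ℕ => f (u 0) := by
  induction hf with
  | zero => exact .const 0
  | succ => exact .add hM (.var 0) (.const 1)
  | left => exact .unpair_fst hM (.var 0)
  | right => exact .unpair_snd hM (.var 0)
  | pair _ _ hf hg => exact .natPair hM hf hg
  | comp _ _ hf hg => exact hf.comp₁ hg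
  | @prec f g _ _ hf hg =>
    have hstep : RepresentableFun M fun u : Fin 3 → ℕ =>
        g (Nat.pair (u 0) (Nat.pair (u 1) (u 2))) :=
      hg.comp₁ (.natPair hM (.var 0) (.natPair hM (.var 1) (.var 2)))
    exact comp₂ (g := fun z i => Nat.rec (f z) (fun y IH => g (Nat.pair z (Nat.pair y IH))) i)
      (natRec hM (g := fun z y IH => g (Nat.pair z (Nat.pair y IH))) hf hstep)
      (.unpair_fst hM (.var (0 : Fin 1))) (.unpair_snd hM (.var 0))

theorem RepresentableFun.primrec (hM : IsPAModel M) {f : ℕ → ℕ} (hf : _root_.Primrec f)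
    (ht : RepresentableFun M t) : RepresentableFun M fun u => f (t u) :=
  comp₁ (of_natPrimrec hM (Primrec.nat_iff.1 hf)) ht

theorem Representable.primrecPred (hM : IsPAModel M) {p : ℕ → Prop} (hp : PrimrecPred p)
    (ht : RepresentableFun M t) : Representable fun u (_ : M) => p (t u) := by
  classical
  exact (Representable.eq hM (.primrec hM (Primrec.encode.comp hp.decide) ht)
    (.const (Encodable.encode true))).of_iff fun u _ => by
    simp only [Encodable.encode_inj, decide_eq_true_eq]

theorem Representable.primrecRel (hM : IsPAModel M) {p : ℕ → ℕ → Prop} (hp : PrimrecRel p)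
    (hs : RepresentableFun M s) (ht : RepresentableFun M t) :
    Representable fun u (_ : M) => p (s u) (t u) :=
  (primrecPred hM (PrimrecPred.comp hp Primrec.unpair) (.natPair hM hs ht)).of_iff fun u _ => by
    rw [Nat.unpair_pair]

end RepresentableFun

section StandardSystem

variable {M : Type*} [arith.Structure M] {n : ℕ}

theorem primrec_two_pow : Primrec fun n : ℕ => 2 ^ n := by
  refine (Primrec.nat_rec₁ (f := fun _ r => 2 * r) 1
    (Primrec.nat_double.comp Primrec.snd)).of_eq fun n => ?_
  induction n with
  | zero => rfl
  | succ n ih => rw [pow_succ', ← ih]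

theorem Representable.digitB (hM : IsPAModel M) {g : M → M} (hg : DefinableFun₁ g)
    {t : (Fin n → ℕ) → ℕ} (ht : RepresentableFun M t) :
    Representable fun u y => digitB (g y) (t u) := by
  have hblocks : Representable fun (u : Fin 2 → ℕ) (y : M) => ∃ b v : M,
      g y = addM (mulM b (numeral M (u 0))) (addM (numeral M (u 1)) v) ∧ ltM v (numeral M (u 1)) :=
    ⟨fun w => ∃ b v, g (w 0) = addM (mulM b (w 1)) (addM (w 2) v) ∧ ltM v (w 2),
      .exists (.exists (.and (.eq (hg.comp (.var 2))
        (.add (.mul (.var 1) (.var 3)) (.add (.var 4) (.var 0)))) (.lt (.var 0) (.var 4)))),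
      fun _ _ => Iff.rfl⟩
  exact comp₂ (P := fun p q y => ∃ b v : M,
      g y = addM (mulM b (numeral M p)) (addM (numeral M q) v) ∧ ltM v (numeral M q)) hblocks
    (.primrec hM primrec_two_pow (.add hM ht (.const 1))) (.primrec hM primrec_two_pow ht)

theorem exists_testBit_iff_mem (A : Set ℕ) (m : ℕ) :
    ∃ y, m ≤ y ∧ ∀ i < m, y.testBit i ↔ i ∈ A := by
  classical
  let g (i : Fin (m + 1)) : Bool := decide (i.val = m ∨ i.val ∈ A)
  refine ⟨Nat.ofBits g, ?_, fun i hi => ?_⟩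
  · have htop : (Nat.ofBits g).testBit m := by
      rw [Nat.testBit_ofBits_lt g m m.lt_succ_self]
      simp [g]
    exact Nat.lt_two_pow_self.le.trans (Nat.ge_two_pow_of_testBit htop)
  · rw [Nat.testBit_ofBits_lt g i (by omega)]
    simp [g, hi.ne]

theorem Representable.setOf_mem_SSy (hM : IsPAModel M) {a : M} (ha : ¬ IsStd a) {A : ℕ → Prop}
    (hA : Representable fun (u : Fin 1 → ℕ) (_ : M) => A (u 0)) : {i | A i} ∈ SSy M := by
  have hid : DefinableFun₁ fun y : M => y := DefinablePred.eq (.var 0) (.var 1)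
  have hlt : Representable fun (u : Fin 1 → ℕ) (y : M) => ltM y (numeral M (u 0)) :=
    ⟨_, .lt (.var 0) (.var 1), fun _ _ => Iff.rfl⟩
  -- Being at least every numeral makes `y` non-standard.
  obtain ⟨y, hy⟩ := exists_forall hM ha
    (P := fun i y => ¬ ltM y (numeral M i) ∧ (Arith.digitB y i ↔ A i))
    (hlt.not.and (.iff (digitB hM hid (.var 0)) hA)) (fun m => by
      obtain ⟨y, hmy, hy⟩ := exists_testBit_iff_mem {i | A i} m
      refine ⟨numeral M y, fun i hi => ⟨?_, ?_⟩⟩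
      · rw [hM.numeral_lt_numeral, not_lt]
        exact hi.le.trans hmy
      · rw [hM.digitB_numeral_iff_testBit]
        exact hy i hi)
  refine ⟨y, ?_, fun i => (hy i).2.symm⟩
  rintro ⟨j, rfl⟩
  exact (hy (j + 1)).1 (hM.numeral_lt_numeral.2 j.lt_succ_self)

end StandardSystem

section Realizability

variable {M : Type*} [arith.Structure M] {k : ℕ}

/-- The finite part of the type `{x < d} ∪ {(f_i(x))_n = X_i(n) : i, n}` that concerns the digits
`n < m` is realized in `M`. -/
def RealizableUpTo (d : M) (f : Fin k → M → M) (X : Fin k → Set ℕ) (m : ℕ) : Prop :=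
  ∃ c, ltM c d ∧ ∀ i, ∀ n < m, (n ∈ X i ↔ digitB (f i c) n)

/-- The type `{x < d} ∪ {(f_i(x))_n = X_i(n) : i, n}` is finitely realizable in `M`: since finitely
many of its formulas mention finitely many digits, it is enough to bound the digits. -/
def FinitelyRealizable (d : M) (f : Fin k → M → M) (X : Fin k → Set ℕ) : Prop :=
  ∀ m, RealizableUpTo d f X m

/-- The initial segment of length `m` of the characteristic sequence of `X`. -/
noncomputable def initSeg (X : Set ℕ) (m : ℕ) : List Bool :=
  List.ofFn fun j : Fin m => chi X j

/-- The set `T` of (codes of) `k`-tuples of binary sequences of equal length which are initial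
segments of the digits of `f_i(c)`, for some `c < d`. -/
def realizedTuples (d : M) (f : Fin k → M → M) : Set ℕ :=
  {x | ∃ l : List (List Bool), x = Encodable.encode l ∧
    l.length = k ∧ (∀ s ∈ l, s.length = (l.headD []).length) ∧
    ∃ c : M, ltM c d ∧ ∀ (i : Fin k), ∀ n < (l.getD i.val []).length,
      (digitB (f i c) n ↔ (l.getD i.val []).getD n false = true)}

/-- The section `T'` of a set `T` of tuples of binary sequences at the initial segments of `X`:
the set of `τ` whose extension of the tuple of initial segments of length `|τ|` lies in `T`. -/
def sectionTree (X : Fin k → Set ℕ) (T : Set ℕ) : Set ℕ :=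
  {x | ∃ τ : List Bool, x = Encodable.encode τ ∧
    Encodable.encode ((List.ofFn fun i : Fin k => initSeg (X i) τ.length) ++ [τ]) ∈ T}

theorem chi_eq_true_iff {X : Set ℕ} {n : ℕ} : chi X n = true ↔ n ∈ X := by
  simp [chi]

theorem length_initSeg (X : Set ℕ) (m : ℕ) : (initSeg X m).length = m :=
  List.length_ofFn

theorem getElem_initSeg {X : Set ℕ} {m n : ℕ} (hn : n < (initSeg X m).length) :
    (initSeg X m)[n] = chi X n :=
  List.getElem_ofFn _

theorem initSeg_getD_eq_true_iff {X : Set ℕ} {m n : ℕ} (hn : n < m) :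
    (initSeg X m).getD n false = true ↔ n ∈ X := by
  rw [List.getD_eq_getElem _ _ (by rwa [length_initSeg]), getElem_initSeg, chi_eq_true_iff]

theorem initSeg_setOf_getD_of_prefix {s t : List Bool} (h : t <+: s) :
    initSeg {n | s.getD n false = true} t.length = t := by
  refine List.ext_getElem (length_initSeg _ _) fun n _ hn => ?_
  rw [getElem_initSeg, Bool.eq_iff_iff, chi_eq_true_iff, Set.mem_ofPred_eq,
    List.getD_eq_getElem _ _ (hn.trans_le h.length_le), h.getElem hn]

theorem isBinTreeSet_of_initSeg {T : Set ℕ} (h : ∀ P, ∀ n, ∀ m ≤ n,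
    Encodable.encode (initSeg P n) ∈ T → Encodable.encode (initSeg P m) ∈ T) :
    IsBinTreeSet T := by
  intro s hs t hts
  rw [← initSeg_setOf_getD_of_prefix hts]
  refine h _ _ _ hts.length_le ?_
  rwa [initSeg_setOf_getD_of_prefix List.prefix_rfl]

theorem treeInf_of_initSeg {T : Set ℕ} (h : ∀ m, ∃ P, Encodable.encode (initSeg P m) ∈ T) :
    TreeInf T := by
  choose P hP using h
  refine Set.infinite_of_injective_forall_mem (f := fun m => initSeg (P m) m) (fun m n hmn => ?_) hP
  simpa only [length_initSeg] using congrArg List.length hmn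

theorem PathThrough.encode_initSeg_mem {P T : Set ℕ} (h : PathThrough P T) (m : ℕ) :
    Encodable.encode (initSeg P m) ∈ T :=
  h (chi P) (fun _ => chi_eq_true_iff) m

variable {d : M} {f : Fin k → M → M} {X : Fin k → Set ℕ} {m : ℕ}

theorem RealizableUpTo.mono {n : ℕ} (h : RealizableUpTo d f X n) (hmn : m ≤ n) :
    RealizableUpTo d f X m := by
  obtain ⟨c, hc, hX⟩ := h
  exact ⟨c, hc, fun i j hj => hX i j (hj.trans_le hmn)⟩

theorem realizableUpTo_snoc {f : Fin (k + 1) → M → M} {P : Set ℕ} :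
    RealizableUpTo d f (Fin.snoc (α := fun _ => Set ℕ) X P) m ↔
      ∃ c, ltM c d ∧ (∀ i : Fin k, ∀ n < m, (n ∈ X i ↔ digitB (f i.castSucc c) n)) ∧
        ∀ n < m, (n ∈ P ↔ digitB (f (Fin.last k) c) n) := by
  simp only [RealizableUpTo, Fin.forall_fin_succ', Fin.snoc_castSucc, Fin.snoc_last]

theorem exists_realizableUpTo_snoc {f : Fin (k + 1) → M → M}
    (h : RealizableUpTo d (fun i => f i.castSucc) X m) :
    ∃ P, RealizableUpTo d f (Fin.snoc (α := fun _ => Set ℕ) X P) m := by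
  obtain ⟨c, hc, hX⟩ := h
  exact ⟨{n | digitB (f (Fin.last k) c) n}, realizableUpTo_snoc.2 ⟨c, hc, hX, fun _ _ => Iff.rfl⟩⟩

theorem encode_ofFn_initSeg_mem_realizedTuples :
    Encodable.encode (List.ofFn fun i => initSeg (X i) m) ∈ realizedTuples d f ↔
      RealizableUpTo d f X m := by
  set l := List.ofFn fun i => initSeg (X i) m with hl
  have hlength {s : List Bool} (hs : s ∈ l) : s.length = m := by
    obtain ⟨i, rfl⟩ := List.mem_ofFn.1 hs
    exact length_initSeg _ _
  have hequal : ∀ s ∈ l, s.length = (l.headD []).length := by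
    rcases l with - | ⟨s, l⟩
    · simp
    · exact fun t ht => (hlength ht).trans (hlength List.mem_cons_self).symm
  have hrow (i : Fin k) : l.getD i [] = initSeg (X i) m := by
    rw [hl, List.getD_eq_getElem _ _ (by simp), List.getElem_ofFn]
  have hdigits (c : M) : (∀ i : Fin k, ∀ n < (l.getD i []).length,
      (digitB (f i c) n ↔ (l.getD i []).getD n false = true)) ↔
      ∀ i, ∀ n < m, (n ∈ X i ↔ digitB (f i c) n) := by
    refine forall_congr' fun i => ?_
    rw [hrow, length_initSeg]
    exact forall₂_congr fun n hn =>
      (iff_congr Iff.rfl (initSeg_getD_eq_true_iff hn)).trans Iff.comm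
  constructor
  · rintro ⟨l', hl', -, -, c, hc, h⟩
    obtain rfl := Encodable.encode_injective hl'
    exact ⟨c, hc, (hdigits c).1 h⟩
  · rintro ⟨c, hc, h⟩
    exact ⟨l, rfl, List.length_ofFn, hequal, c, hc, (hdigits c).2 h⟩

theorem encode_initSeg_mem_sectionTree {T P : Set ℕ} :
    Encodable.encode (initSeg P m) ∈ sectionTree X T ↔
      Encodable.encode (List.ofFn fun i =>
        initSeg (Fin.snoc (α := fun _ => Set ℕ) X P i) m) ∈ T := by
  rw [List.ofFn_succ_last]
  simp only [Fin.snoc_castSucc, Fin.snoc_last]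
  constructor
  · rintro ⟨τ, hτ, h⟩
    obtain rfl := Encodable.encode_injective hτ
    rwa [length_initSeg] at h
  · exact fun h => ⟨_, rfl, by rwa [length_initSeg]⟩

theorem encode_initSeg_mem_sectionTree_realizedTuples {f : Fin (k + 1) → M → M} {P : Set ℕ} :
    Encodable.encode (initSeg P m) ∈ sectionTree X (realizedTuples d f) ↔
      RealizableUpTo d f (Fin.snoc (α := fun _ => Set ℕ) X P) m :=
  encode_initSeg_mem_sectionTree.trans encode_ofFn_initSeg_mem_realizedTuples

theorem primrec_decode_getD_default {α : Type*} [Primcodable α] [Inhabited α] :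
    Primrec fun x => (Encodable.decode (α := α) x).getD default :=
  Primrec.option_getD.comp Primrec.decode (Primrec.const default)

theorem exists_eq_encode_and_iff {α : Type*} [Encodable α] [Inhabited α] {p : α → Prop} {x : ℕ} :
    (∃ a, x = Encodable.encode a ∧ p a) ↔
      x ∈ Set.range (Encodable.encode (α := α)) ∧ p ((Encodable.decode x).getD default) := by
  constructor
  · rintro ⟨a, rfl, ha⟩
    exact ⟨⟨a, rfl⟩, by rwa [Encodable.encodek]⟩
  · rintro ⟨⟨a, rfl⟩, ha⟩
    exact ⟨a, rfl, by rwa [Encodable.encodek] at ha⟩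

theorem primrecPred_forall_mem_length_eq :
    PrimrecPred fun l : List (List Bool) => ∀ s ∈ l, s.length = (l.headD []).length := by
  have hrel : PrimrecRel fun (s : List Bool) (m : ℕ) => s.length = m :=
    Primrec.eq.comp (Primrec.list_length.comp Primrec.fst) Primrec.snd
  simp only [List.headD_eq_head?_getD]
  exact hrel.forall_mem_list.comp Primrec.id (Primrec.list_length.comp
    (Primrec.option_getD.comp Primrec.list_head? (Primrec.const [])))

theorem realizedTuples_mem_SSy (hM : IsPAModel M) {a : M} (ha : ¬ IsStd a)
    (hf : ∀ i, DefinableFun₁ (f i)) : realizedTuples d f ∈ SSy M := by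
  let dec (x : ℕ) : List (List Bool) := (Encodable.decode x).getD default
  have hdec : Primrec dec := primrec_decode_getD_default
  have hrow (i : ℕ) : Primrec fun x => (dec x).getD i [] :=
    (Primrec.list_getD []).comp hdec (Primrec.const i)
  have hshape : PrimrecPred fun x => (x ∈ Set.range (Encodable.encode (α := List (List Bool))) ∧
      (dec x).length = k) ∧ ∀ s ∈ dec x, s.length = ((dec x).headD []).length :=
    (Primcodable.mem_range_encode.and (Primrec.eq.comp (Primrec.list_length.comp hdec)
      (Primrec.const k))).and (primrecPred_forall_mem_length_eq.comp hdec)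
  have hbit (i : ℕ) : PrimrecRel fun x n => ((dec x).getD i []).getD n false = true :=
    Primrec.eq.comp ((Primrec.list_getD false).comp ((hrow i).comp Primrec.fst) Primrec.snd)
      (Primrec.const true)
  have hdigits : Representable fun (u : Fin 1 → ℕ) (c : M) => ltM c d ∧ ∀ i : Fin k,
      ∀ n < ((dec (u 0)).getD i []).length,
        (digitB (f i c) n ↔ ((dec (u 0)).getD i []).getD n false = true) := by
    refine .and ⟨_, .lt (.var 0) (.const d), fun _ _ => Iff.rfl⟩ (.forall_finite fun i => ?_)
    exact .forall_lt hM
      (P := fun u n c => digitB (f i c) n ↔ ((dec (u 0)).getD i []).getD n false = true)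
      (.primrec hM (Primrec.list_length.comp (hrow i)) (.var 0))
      (.iff (.digitB hM (hf i) (.var 0)) (.primrecRel hM (hbit i) (.var 1) (.var 0)))
  have hrep : Representable fun (u : Fin 1 → ℕ) (_ : M) => u 0 ∈ realizedTuples d f :=
    ((Representable.primrecPred hM hshape (.var 0)).and hdigits.exists).of_iff fun u _ =>
      (exists_eq_encode_and_iff.trans (by simp only [and_assoc, dec])).symm
  exact hrep.setOf_mem_SSy (A := (· ∈ realizedTuples d f)) hM ha

end Realizability

section TuringReducibility

variable {O : ℕ → ℕ} {α β γ : Type*} [Primcodable α] [Primcodable β] [Primcodable γ]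

theorem RecursiveIn.of_eq {f g : ℕ →. ℕ} (hf : RecursiveIn O f) (h : ∀ n, f n = g n) :
    RecursiveIn O g :=
  (funext h : f = g) ▸ hf

theorem RecursiveIn.of_partrec {f : ℕ →. ℕ} (hf : Nat.Partrec f) : RecursiveIn O f := by
  induction hf with
  | zero => exact .zero
  | succ => exact .succ
  | left => exact .left
  | right => exact .right
  | pair _ _ hf hg => exact .pair hf hg
  | comp _ _ hf hg => exact .comp hf hg
  | prec _ _ hf hg => exact .prec hf hg
  | rfind _ hf => exact .rfind hf

theorem RecursiveIn.trans {Q : ℕ → ℕ} {f : ℕ →. ℕ} (hf : RecursiveIn Q f)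
    (hQ : RecursiveIn O Q) : RecursiveIn O f := by
  induction hf with
  | zero => exact .zero
  | succ => exact .succ
  | left => exact .left
  | right => exact .right
  | oracle => exact hQ
  | pair _ _ hf hg => exact .pair hf hg
  | comp _ _ hf hg => exact .comp hf hg
  | prec _ _ hf hg => exact .prec hf hg
  | rfind _ hf => exact .rfind hf

variable (O) in
/-- A total function from `ℕ` to an encodable type is computable in the oracle `O`. This extends
`RecursiveIn` to sequences of bits and of lists of bits. -/
def ComputableFrom (A : ℕ → α) : Prop :=
  RecursiveIn O fun n => Part.some (Encodable.encode (A n))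

namespace ComputableFrom

theorem of_computable {A : ℕ → α} (hA : Computable A) : ComputableFrom O A :=
  (RecursiveIn.of_partrec hA).of_eq fun n => by simp

theorem comp {A : ℕ → α} {B : ℕ → ℕ} (hA : ComputableFrom O A) (hB : ComputableFrom O B) :
    ComputableFrom O fun n => A (B n) :=
  (RecursiveIn.comp hA hB).of_eq fun n => by simp

theorem map {g : α → β} {A : ℕ → α} (hg : Computable g) (hA : ComputableFrom O A) :
    ComputableFrom O fun n => g (A n) :=
  (RecursiveIn.comp (.of_partrec hg) hA).of_eq fun n => by simp

theorem map₂ {g : α → β → γ} {A : ℕ → α} {B : ℕ → β} (hg : Computable₂ g)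
    (hA : ComputableFrom O A) (hB : ComputableFrom O B) :
    ComputableFrom O fun n => g (A n) (B n) := by
  have hpair : ComputableFrom O fun n => (A n, B n) :=
    (RecursiveIn.pair hA hB).of_eq fun n => by simp [Seq.seq]
  exact hpair.map hg

theorem natRec {s : α → β → α} {B : ℕ → β} (a : α) (hs : Computable₂ s)
    (hB : ComputableFrom O B) :
    ComputableFrom O fun n => (Nat.rec a (fun y r => s r (B y)) n : α) := by
  have hbase : ComputableFrom O fun _ : ℕ => a := of_computable (Computable.const a)
  have hsnd : Computable fun p : ℕ => p.unpair.2.unpair := .comp .unpair (.comp .snd .unpair)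
  have hstep := (RecursiveIn.of_partrec hs).comp
    (.pair (of_computable (.comp .snd hsnd)) (hB.comp (of_computable (.comp .fst hsnd))))
  have hstart : ComputableFrom O (Nat.pair 0) :=
    of_computable (Primrec₂.natPair.comp (Primrec.const 0) Primrec.id).to_comp
  refine ((RecursiveIn.prec hbase hstep).comp hstart).of_eq fun n => ?_
  simp only [Part.bind_eq_bind, Part.bind_some, Encodable.encode_nat, Nat.unpaired, Nat.unpair_pair]
  induction n with
  | zero => rfl
  | succ n ih =>
    simp only [ih]
    simp [Seq.seq]

theorem ofFn {k : ℕ} {A : Fin k → ℕ → α} (hA : ∀ i, ComputableFrom O (A i)) :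
    ComputableFrom O fun n => List.ofFn fun i => A i n := by
  induction k with
  | zero => simpa only [List.ofFn_zero] using of_computable (Computable.const [])
  | succ k ih =>
    simp only [List.ofFn_succ]
    exact map₂ Computable.list_cons (hA 0) (ih fun i => hA i.succ)

theorem initSeg {X : Set ℕ} (hX : ComputableFrom O (chi X)) :
    ComputableFrom O fun m => Arith.initSeg X m := by
  convert hX.natRec [] Computable.list_concat using 1
  funext m
  induction m with
  | zero => rfl
  | succ m ih =>
    simp only [Arith.initSeg, List.ofFn_succ_last, Fin.val_castSucc, Fin.val_last] at ih ⊢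
    rw [ih]

end ComputableFrom

theorem encode_chi (X : Set ℕ) (n : ℕ) : Encodable.encode (chi X n) = charFn X n := by
  by_cases h : n ∈ X <;> simp [chi, charFn, h]

theorem turingLE_iff_computableFrom_chi {X Y : Set ℕ} :
    TuringLE Y X ↔ ComputableFrom (charFn X) (chi Y) := by
  simp only [ComputableFrom, encode_chi]
  rfl

theorem TuringLE.trans {X Y Z : Set ℕ} (hXY : TuringLE X Y) (hYZ : TuringLE Y Z) :
    TuringLE X Z :=
  RecursiveIn.trans hXY hYZ

theorem turingLE_empty (X : Set ℕ) : TuringLE ∅ X :=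
  RecursiveIn.zero.of_eq fun n => by simp [charFn, pure, PFun.pure]

theorem turingLE_of_manyOne {X Y : Set ℕ} {p : ℕ → ℕ} (hp : Computable p)
    (h : ∀ n, p n ∈ Y ↔ n ∈ X) : TuringLE X Y := by
  classical
  have hcomp : ComputableFrom (charFn Y) fun n => charFn Y (p n) :=
    ComputableFrom.comp (A := charFn Y) .oracle (.of_computable hp)
  exact hcomp.of_eq fun n => congrArg Part.some (if_congr (h n) rfl rfl)

theorem turingLE_turingJoin_left (X Y : Set ℕ) : TuringLE X (turingJoin X Y) := by
  refine turingLE_of_manyOne Primrec.nat_double.to_comp fun n => ⟨?_, fun h => .inl ⟨n, h, rfl⟩⟩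
  rintro (⟨m, hm, h⟩ | ⟨m, -, h⟩)
  · rwa [show n = m by omega]
  · omega

theorem turingLE_turingJoin_right (X Y : Set ℕ) : TuringLE Y (turingJoin X Y) := by
  refine turingLE_of_manyOne Primrec.nat_double_succ.to_comp
    fun n => ⟨?_, fun h => .inr ⟨n, h, rfl⟩⟩
  rintro (⟨m, -, h⟩ | ⟨m, hm, h⟩)
  · omega
  · rwa [show n = m by omega]

theorem turingLE_joinMany {k : ℕ} (X : Fin k → Set ℕ) (i : Fin k) :
    TuringLE (X i) (joinMany X) := by
  induction k with
  | zero => exact i.elim0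
  | succ k ih =>
    refine Fin.lastCases (turingLE_turingJoin_right _ _) (fun i => ?_) i
    exact (ih (fun i => X i.castSucc) i).trans (turingLE_turingJoin_left _ _)

theorem TuringIdeal.joinMany_mem {S : Set (Set ℕ)} (hS : TuringIdeal S) (hne : S.Nonempty)
    {k : ℕ} {X : Fin k → Set ℕ} (hX : ∀ i, X i ∈ S) : joinMany X ∈ S := by
  induction k with
  | zero =>
    obtain ⟨Y, hY⟩ := hne
    exact hS.2 Y hY _ (turingLE_empty Y)
  | succ k ih => exact hS.1 _ (ih fun i => hX i.castSucc) _ (hX (Fin.last k))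

theorem sectionTree_turingLE {k : ℕ} {X : Fin k → Set ℕ} {T J : Set ℕ}
    (hX : ∀ i, TuringLE (X i) J) (hT : TuringLE T J) : TuringLE (sectionTree X T) J := by
  simp only [turingLE_iff_computableFrom_chi] at hX hT ⊢
  let dec (x : ℕ) : List Bool := (Encodable.decode x).getD default
  let tuple (τ : List Bool) := (List.ofFn fun i => initSeg (X i) τ.length) ++ [τ]
  have hdec : Primrec dec := primrec_decode_getD_default
  have htuple : ComputableFrom (charFn J) fun x => tuple (dec x) :=
    .map₂ (g := fun l (τ : List Bool) => l ++ [τ]) Computable.list_concat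
      (.ofFn fun i => (hX i).initSeg.comp (.of_computable (Primrec.list_length.comp hdec).to_comp))
      (.of_computable hdec.to_comp)
  have hquery : ComputableFrom (charFn J) fun x => chi T (Encodable.encode (tuple (dec x))) :=
    hT.comp (htuple.map Computable.encode)
  obtain ⟨_, hrange⟩ := Primcodable.mem_range_encode (α := List Bool)
  convert ComputableFrom.map₂ Primrec.and.to_comp (.of_computable hrange.to_comp) hquery using 1
  funext x
  rw [Bool.eq_iff_iff, Bool.and_eq_true, decide_eq_true_iff, chi_eq_true_iff, chi_eq_true_iff]
  exact exists_eq_encode_and_iff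

end TuringReducibility

section Extension

variable {M : Type*} [arith.Structure M] {d : M} {k : ℕ} {f : Fin (k + 1) → M → M}
  {X : Fin k → Set ℕ}

theorem isBinTreeSet_sectionTree_realizedTuples :
    IsBinTreeSet (sectionTree X (realizedTuples d f)) :=
  isBinTreeSet_of_initSeg fun _ _ _ hmn h =>
    encode_initSeg_mem_sectionTree_realizedTuples.2
      ((encode_initSeg_mem_sectionTree_realizedTuples.1 h).mono hmn)

theorem treeInf_sectionTree_realizedTuples
    (h : FinitelyRealizable d (fun i => f i.castSucc) X) :
    TreeInf (sectionTree X (realizedTuples d f)) :=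
  treeInf_of_initSeg fun m => (exists_realizableUpTo_snoc (h m)).imp fun _ =>
    encode_initSeg_mem_sectionTree_realizedTuples.2

theorem PathThrough.finitelyRealizable_snoc {P : Set ℕ}
    (h : PathThrough P (sectionTree X (realizedTuples d f))) :
    FinitelyRealizable d f (Fin.snoc (α := fun _ => Set ℕ) X P) :=
  fun m => encode_initSeg_mem_sectionTree_realizedTuples.1 (h.encode_initSeg_mem m)

end Extension

end Arith

open Arith in
theorem statement_16_general {S : Set (Set ℕ)} (hS : ScottSet S)
    {M : Type*} [arith.Structure M] (hM : IsPAModel M) (hsub : SSy M ⊆ S)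
    {a : M} (ha : ¬ IsStd a) (d : M) {k : ℕ} {f : Fin (k + 1) → M → M}
    (hf : ∀ i, DefinableFun₁ (f i)) {X : Fin k → Set ℕ} (hX : ∀ i, X i ∈ S)
    (hreal : FinitelyRealizable d (fun i => f i.castSucc) X) :
    realizedTuples d f ∈ SSy M ∧
    IsBinTreeSet (sectionTree X (realizedTuples d f)) ∧
    TreeInf (sectionTree X (realizedTuples d f)) ∧
    TuringLE (sectionTree X (realizedTuples d f)) (turingJoin (joinMany X) (realizedTuples d f)) ∧
    ∃ P ∈ S, PathThrough P (sectionTree X (realizedTuples d f)) ∧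
      FinitelyRealizable d f (Fin.snoc (α := fun _ => Set ℕ) X P) := by
  obtain ⟨hne, hideal, hpath⟩ := hS
  have hT : realizedTuples d f ∈ SSy M := realizedTuples_mem_SSy hM ha hf
  have htree : IsBinTreeSet (sectionTree X (realizedTuples d f)) :=
    isBinTreeSet_sectionTree_realizedTuples
  have hinf := treeInf_sectionTree_realizedTuples hreal
  have hle : TuringLE (sectionTree X (realizedTuples d f))
      (turingJoin (joinMany X) (realizedTuples d f)) :=
    sectionTree_turingLE (fun i => (turingLE_joinMany X i).trans (turingLE_turingJoin_left _ _))
      (turingLE_turingJoin_right _ _)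
  have hmem : sectionTree X (realizedTuples d f) ∈ S :=
    hideal.2 _ (hideal.1 _ (hideal.joinMany_mem hne hX) _ (hsub hT)) _ hle
  obtain ⟨P, hPS, hP⟩ := hpath _ hmem htree hinf
  exact ⟨hT, htree, hinf, hle, P, hPS, hP, hP.finitelyRealizable_snoc⟩

open Arith in
/-- The key step in the proof of Ehrenfeucht's theorem.  With `M` a countable
non-standard model of `PA`, `SSy(M) ⊆ S` a Scott set, `a ∈ M − ω`, `f₀, …, f_{k+1}`
`M`-definable (coded) functions, `X₀, …, X_k ∈ S` such that
`p_k(x) = {x < 2^a} ∪ {(f_i(x))_n = X_i(n) : i ≤ k, n ∈ ω}` is finitely realizable in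
`M`, `T` the coded set of tuples `σ⃗ = (σ_i : i ≤ k+1)` of finite binary sequences of
equal length with `W(σ⃗) ≠ ∅`, and `T'` the set of `τ` with `(τ₀, …, τ_k, τ) ∈ T` where
`τ_i = X_i ↾ |τ|`: then `T ∈ SSy(M)`, `T'` is an infinite binary tree Turing reducible
to `(⊕_{i≤k} X_i) ⊕ T`, `S` contains an infinite path `X_{k+1}` of `T'`, and
`p_{k+1}(x) = p_k(x) ∪ {(f_{k+1}(x))_n = X_{k+1}(n) : n ∈ ω}` is finitely realizable
in `M`. -/
theorem statement_16 (S : Set (Set ℕ)) (hS : ScottSet S)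
    (M : Type) [arith.Structure M] (hM : NonstandardModel M) (hMc : Countable M)
    (hsub : SSy M ⊆ S)
    (a d : M) (ha : ¬ IsStd a) (hd : IsPow2 a d)
    (k : ℕ) (f : Fin (k + 2) → M → M) (hf : ∀ i, DefinableFun₁ (f i))
    (X : Fin (k + 1) → Set ℕ) (hX : ∀ i, X i ∈ S)
    (hreal : ∀ mf : ℕ, ∃ c : M, ltM c d ∧
      ∀ (i : Fin (k + 1)), ∀ n < mf, (n ∈ X i ↔ digitB (f i.castSucc c) n))
    (T : Set ℕ)
    (hT : T = {x | ∃ l : List (List Bool), x = Encodable.encode l ∧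
      l.length = k + 2 ∧ (∀ s ∈ l, s.length = (l.headD []).length) ∧
      ∃ c : M, ltM c d ∧ ∀ (i : Fin (k + 2)), ∀ n < (l.getD i.val []).length,
        (digitB (f i c) n ↔ (l.getD i.val []).getD n false = true)})
    (T' : Set ℕ)
    (hT' : T' = {x | ∃ τ : List Bool, x = Encodable.encode τ ∧
      Encodable.encode ((List.ofFn fun i : Fin (k + 1) =>
        List.ofFn fun j : Fin τ.length => chi (X i) j.val) ++ [τ]) ∈ T}) :
    T ∈ SSy M ∧
    IsBinTreeSet T' ∧ TreeInf T' ∧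
    TuringLE T' (turingJoin (joinMany X) T) ∧
    ∃ P ∈ S, PathThrough P T' ∧
      ∀ mf : ℕ, ∃ c : M, ltM c d ∧
        (∀ (i : Fin (k + 1)), ∀ n < mf, (n ∈ X i ↔ digitB (f i.castSucc c) n)) ∧
        (∀ n < mf, (n ∈ P ↔ digitB (f (Fin.last (k + 1)) c) n)) := by
  subst hT hT'
  obtain ⟨hT, htree, hinf, hle, P, hPS, hP, hext⟩ :=
    statement_16_general hS hM.1 hsub ha d hf hX hreal
  exact ⟨hT, htree, hinf, hle, P, hPS, hP, fun m => realizableUpTo_snoc.1 (hext m)⟩
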